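/- Let λ, ε, δ > 0, let G be a graph on N vertices with e(G) > 0 which is (λ,B)-stable with respect to (ε,δ) for a family B of subsets of V(G), and let ℓ and t be integers with t > ℓ ≥ ln(1/((1−δ)λ)) · N²/(2δ·e(G)) and ℓ > 0. Then there exists a function P assigning to each ℓ-element set of vertices a subset of V(G), such that for every independent set I of G with |I| = t there exists L ⊆ I with |L| = ℓ, I \ L ⊆ P(L), L ∩ P(L) = ∅, and moreover either |P(L)| ≤ (1−δ)·λ·N, or |P(L) \ B| ≤ ε·λ·N for some B ∈ B. -/

import Mathlib

open MeasureTheory Filter Finset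

noncomputable section

/-- The binomial random subset measure on `V → Bool`: each coordinate is `true`
independently with probability `p`. -/
def bernMeasure (V : Type*) [Fintype V] (p : ℝ) : Measure (V → Bool) :=
  Measure.pi fun _ => (PMF.bernoulli (min (Real.toNNReal p) 1) (min_le_right _ _)).toMeasure

/-- Vertices of the Kneser graph: `k`-element subsets of `[n]`. -/
abbrev KVert (n k : ℕ) := {A : Finset (Fin n) // A.card = k}

/-- The Kneser graph `K(n,k)`. -/
def kneser (n k : ℕ) : SimpleGraph (KVert n k) where
  Adj A B := A ≠ B ∧ Disjoint A.1 B.1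
  symm := ⟨fun A B h => ⟨h.1.symm, h.2.symm⟩⟩
  loopless := ⟨fun A h => h.1 rfl⟩

/-- Total number of edges of a graph. -/
def eTotal {V : Type*} [Fintype V] (G : SimpleGraph V) : ℕ := Nat.card G.edgeSet

/-- Number of edges of `G` with both endpoints in `S`. -/
def eCount {V : Type*} [Fintype V] (G : SimpleGraph V) (S : Finset V) : ℕ :=
  Nat.card (G.induce (S : Set V)).edgeSet

/-- `S` is an independent set of `G`. -/
def IsIndep {V : Type*} (G : SimpleGraph V) (S : Finset V) : Prop :=
  ∀ a ∈ S, ∀ b ∈ S, ¬ G.Adj a b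

/-- Independence number of the subgraph of `G` induced on `{v | ω v = true}`. -/
def alphaSub {V : Type*} [Fintype V] (G : SimpleGraph V) (ω : V → Bool) : ℕ :=
  sSup {m | ∃ S : Finset V, (∀ v ∈ S, ω v = true) ∧ IsIndep G S ∧ S.card = m}

/-- The size of a largest intersecting subfamily of the random hypergraph
determined by `ω`. -/
def maxIntersecting (n k : ℕ) (ω : KVert n k → Bool) : ℕ :=
  sSup {m | ∃ F : Finset (KVert n k), (∀ A ∈ F, ω A = true) ∧
    (∀ A ∈ F, ∀ B ∈ F, (A.1 ∩ B.1).Nonempty) ∧ F.card = m}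

/-- `(λ,γ)`-supersaturation. -/
def Supersaturated {V : Type*} [Fintype V] (G : SimpleGraph V) (lam gam : ℝ) : Prop :=
  ∀ S : Finset V, lam * Fintype.card V ≤ S.card →
    gam * ((S.card : ℝ) / Fintype.card V) ^ 2 * eTotal G ≤ eCount G S

/-- `(λ,B)`-stability with respect to `(ε,δ)`. -/
def StableWrt {V : Type*} [Fintype V] [DecidableEq V] (G : SimpleGraph V) (lam : ℝ)
    (B : Set (Finset V)) (eps del : ℝ) : Prop :=
  ∀ S : Finset V, (1 - del) * lam * Fintype.card V ≤ S.card →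
    (del * ((S.card : ℝ) / Fintype.card V) ^ 2 * eTotal G ≤ eCount G S) ∨
    ∃ b ∈ B, ((S \ b).card : ℝ) ≤ eps * lam * Fintype.card V

end

open Classical in
theorem two_eCount {V : Type*} [Fintype V] (G : SimpleGraph V) (A : Finset V) :
    2 * eCount G A = ∑ a ∈ A, ∑ b ∈ A, if G.Adj a b then 1 else 0 := by
  have h := (G.induce (A : Set V)).sum_degrees_eq_twice_card_edges
  have h1 : eCount G A = (G.induce (A : Set V)).edgeFinset.card := by
    unfold eCount
    rw [Nat.card_eq_fintype_card, SimpleGraph.edgeFinset_card]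
  rw [h1, ← h, ← Finset.sum_coe_sort A]
  refine Finset.sum_congr rfl fun a _ => ?_
  rw [← Finset.sum_coe_sort A, ← SimpleGraph.card_neighborFinset_eq_degree,
    SimpleGraph.neighborFinset_eq_filter, Finset.card_filter]
  rfl

open Classical in
theorem two_eTotal {V : Type*} [Fintype V] (G : SimpleGraph V) :
    2 * eTotal G = ∑ a : V, ∑ b : V, if G.Adj a b then 1 else 0 := by
  have h := G.sum_degrees_eq_twice_card_edges
  have h1 : eTotal G = G.edgeFinset.card := by
    unfold eTotal
    rw [Nat.card_eq_fintype_card, SimpleGraph.edgeFinset_card]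
  rw [h1, ← h]
  refine Finset.sum_congr rfl fun a _ => ?_
  rw [← SimpleGraph.card_neighborFinset_eq_degree,
    SimpleGraph.neighborFinset_eq_filter, Finset.card_filter]

open Classical in
theorem exists_deg {V : Type*} [Fintype V] (G : SimpleGraph V) (A : Finset V)
    (hA : A.Nonempty) :
    ∃ v ∈ A, 2 * eCount G A ≤ A.card * (A.filter (G.Adj v)).card := by
  obtain ⟨v, hv, hmax⟩ := A.exists_max_image (fun v => (A.filter (G.Adj v)).card) hA
  refine ⟨v, hv, ?_⟩
  rw [two_eCount, ← smul_eq_mul]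
  refine Finset.sum_le_card_nsmul _ _ _ fun a ha => ?_
  rw [← Finset.card_filter]
  exact hmax a ha

open Classical in
theorem eCount_erase {V : Type*} [Fintype V] [DecidableEq V] (G : SimpleGraph V) (v : V) :
    eCount G (univ.erase v) + (univ.filter (G.Adj v)).card = eTotal G := by
  have h1 := two_eCount G (univ.erase v)
  have h2 := two_eTotal G
  have h3 : ∀ a, (∑ b : V, if G.Adj a b then 1 else 0) =
      (∑ b ∈ univ.erase v, if G.Adj a b then 1 else 0) + if G.Adj a v then 1 else 0 :=
    fun a => (Finset.sum_erase_add _ _ (mem_univ v)).symm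
  have h4 : (∑ b ∈ univ.erase v, if G.Adj v b then 1 else 0) = (univ.filter (G.Adj v)).card := by
    rw [Finset.card_filter, ← Finset.sum_erase_add _ _ (mem_univ v)]; simp
  have h5 : (∑ b ∈ univ.erase v, if G.Adj b v then 1 else 0) = (univ.filter (G.Adj v)).card := by
    rw [← h4]; simp only [G.adj_comm]
  rw [← Finset.sum_erase_add _ _ (mem_univ v)] at h2
  simp only [h3] at h2
  rw [Finset.sum_add_distrib, h5, h4, ← h1] at h2
  simp at h2
  omega

theorem eCount_univ {V : Type*} [Fintype V] (G : SimpleGraph V) :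
    eCount G univ = eTotal G := by
  have h1 := two_eCount G univ
  have h2 := two_eTotal G
  omega

open Classical in
theorem fingerprint_core {V : Type*} [Fintype V] [DecidableEq V] (G : SimpleGraph V)
    (Good : Finset V → Prop) (hmono : ∀ S T, S ⊆ T → Good T → Good S)
    (N x : ℝ) (hx : 0 < x) (ℓ : ℕ)
    (hfin : ∀ A : Finset V, (A.card : ℝ) ≤ N * Real.exp (-x * ℓ) → Good A)
    (hdeg : ∀ A : Finset V, ¬ Good A → ∃ v ∈ A, x * A.card ≤ (A.filter (G.Adj v)).card) :
    ∀ n (A : Finset V), A.card ≤ n → ∀ k ≤ ℓ,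
      (A.card : ℝ) ≤ N * Real.exp (-x * ((ℓ : ℝ) - k)) →
      ∃ P : Finset V → Finset V, (∀ L, P L ⊆ A) ∧ ∀ I ⊆ A, IsIndep G I → k ≤ I.card →
        ∃ L ⊆ I, L.card = k ∧ I \ L ⊆ P L ∧ L ∩ P L = ∅ ∧ Good (P L) := by
  have triv : ∀ (A : Finset V) (k : ℕ), Good A →
      ∃ P : Finset V → Finset V, (∀ L, P L ⊆ A) ∧ ∀ I ⊆ A, IsIndep G I → k ≤ I.card →
        ∃ L ⊆ I, L.card = k ∧ I \ L ⊆ P L ∧ L ∩ P L = ∅ ∧ Good (P L) := by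
    intro A k hA
    refine ⟨fun L => A \ L, fun L => sdiff_subset, fun I hI _ hk => ?_⟩
    obtain ⟨L, hL, hc⟩ := exists_subset_card_eq hk
    exact ⟨L, hL, hc, sdiff_subset_sdiff hI subset_rfl, inter_sdiff_self _ _,
      hmono _ _ sdiff_subset hA⟩
  intro n
  induction n with
  | zero =>
    intro A hA k _ _
    by_cases hg : Good A
    · exact triv A k hg
    · obtain ⟨v, hv, -⟩ := hdeg A hg
      have := card_pos.2 ⟨v, hv⟩
      omega
  | succ n ih =>
    intro A hA k hk hb
    by_cases hg : Good A
    · exact triv A k hg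
    obtain ⟨v, hv, hd⟩ := hdeg A hg
    obtain _ | k := k
    · exact absurd (hfin A (by simpa using hb)) hg
    have hlt := card_erase_of_mem hv
    have hpos := card_pos.2 ⟨v, hv⟩
    obtain ⟨P1, hP1, h1⟩ := ih (A.erase v) (by omega) (k+1) hk (by
      refine le_trans ?_ hb
      exact_mod_cast card_erase_le)
    have hsub : (A.filter (fun b => ¬ G.Adj v b)).erase v ⊆ A.erase v :=
      erase_subset_erase _ (filter_subset _ _)
    obtain ⟨P2, hP2, h2⟩ := ih ((A.filter (fun b => ¬ G.Adj v b)).erase v)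
      (by have := card_le_card hsub; omega) k (by omega) (by
        have e1 : (((A.filter (fun b => ¬ G.Adj v b)).erase v).card : ℝ) ≤
            (A.filter (fun b => ¬ G.Adj v b)).card := by exact_mod_cast card_erase_le
        have e2 : ((A.filter (G.Adj v)).card : ℝ) + (A.filter (fun b => ¬ G.Adj v b)).card
            = A.card := by exact_mod_cast card_filter_add_card_filter_not (s := A) (G.Adj v)
        have e3 : (A.card : ℝ) * (1 - x) ≤ A.card * Real.exp (-x) := by
          gcongr
          have := Real.add_one_le_exp (-x)
          linarith
        have e4 : (A.card : ℝ) * Real.exp (-x) ≤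
            N * Real.exp (-x * ((ℓ : ℝ) - (k + 1 : ℕ))) * Real.exp (-x) := by gcongr
        rw [mul_assoc, ← Real.exp_add] at e4
        have e5 : -x * ((ℓ : ℝ) - (k + 1 : ℕ)) + -x = -x * ((ℓ : ℝ) - k) := by
          push_cast; ring
        rw [e5] at e4
        linarith)
    refine ⟨fun L => if v ∈ L then P2 (L.erase v) else P1 L, fun L => ?_, ?_⟩
    · dsimp only
      split_ifs
      · exact (hP2 _).trans (hsub.trans (erase_subset _ _))
      · exact (hP1 _).trans (erase_subset _ _)
    intro I hI hind hc
    by_cases hvI : v ∈ I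
    · obtain ⟨L, hL, hLc, hLs, hLd, hLg⟩ := h2 (I.erase v) (by
        intro w hw
        rw [mem_erase] at hw
        rw [mem_erase, mem_filter]
        exact ⟨hw.1, hI hw.2, hind v hvI w hw.2⟩)
        (fun a ha b hb => hind a (mem_of_mem_erase ha) b (mem_of_mem_erase hb))
        (by rw [card_erase_of_mem hvI]; omega)
      have hvL : v ∉ L := fun h => by simpa using hL h
      have hvP : v ∉ P2 L := fun h => by simpa using hP2 L h
      refine ⟨insert v L, ?_, ?_, ?_⟩
      · intro w hw
        rcases mem_insert.1 hw with rfl | hw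
        · exact hvI
        · exact mem_of_mem_erase (hL hw)
      · rw [card_insert_of_notMem hvL, hLc]
      · dsimp only
        rw [if_pos (mem_insert_self _ _), erase_insert hvL]
        refine ⟨?_, ?_, hLg⟩
        · intro w hw
          apply hLs
          simp only [Finset.mem_sdiff, mem_insert, mem_erase] at hw ⊢
          tauto
        · rw [insert_inter_of_notMem hvP, hLd]
    · obtain ⟨L, hL, hLc, hLs⟩ := h1 I (subset_erase.2 ⟨hI, hvI⟩) hind hc
      refine ⟨L, hL, hLc, ?_⟩
      dsimp only
      rw [if_neg (fun h => hvI (hL h))]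
      exact hLs

/-- fingerprint corollary for stable graphs. -/
theorem fingerprint_stability {V : Type*} [Fintype V] [DecidableEq V]
    (G : SimpleGraph V) (lam ε δ : ℝ) (hlam : 0 < lam) (hε : 0 < ε) (hδ : 0 < δ)
    (B : Set (Finset V)) (hstab : StableWrt G lam B ε δ)
    (hE : 0 < eTotal G) (ℓ t : ℕ) (hℓ0 : 0 < ℓ)
    (hℓ : Real.log (1 / ((1 - δ) * lam)) * (Fintype.card V : ℝ) ^ 2 /
        (2 * δ * eTotal G) ≤ ℓ)
    (hℓt : ℓ < t) :
    ∃ P : Finset V → Finset V,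
      ∀ I : Finset V, IsIndep G I → I.card = t →
        ∃ L : Finset V, L ⊆ I ∧ L.card = ℓ ∧ I \ L ⊆ P L ∧ L ∩ P L = ∅ ∧
          (((P L).card : ℝ) ≤ (1 - δ) * lam * Fintype.card V ∨
           ∃ b ∈ B, ((P L \ b).card : ℝ) ≤ ε * lam * Fintype.card V) := by
  classical
  have hNpos : 0 < Fintype.card V := by
    by_contra h
    have : IsEmpty V := Fintype.card_eq_zero_iff.1 (by omega)
    have := two_eTotal G
    simp at this
    omega
  have hN : (0 : ℝ) < Fintype.card V := by exact_mod_cast hNpos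
  have hE' : (0 : ℝ) < eTotal G := by exact_mod_cast hE
  have hne : (univ : Finset V).Nonempty := card_pos.1 (by simpa using hNpos)
  have hmono : ∀ S T : Finset V, S ⊆ T →
      (∃ b ∈ B, ((T \ b).card : ℝ) ≤ ε * lam * Fintype.card V) →
      (∃ b ∈ B, ((S \ b).card : ℝ) ≤ ε * lam * Fintype.card V) := by
    rintro S T h ⟨b, hb, hc⟩
    refine ⟨b, hb, le_trans ?_ hc⟩
    exact_mod_cast card_le_card (sdiff_subset_sdiff h subset_rfl)
  rcases le_or_gt 1 δ with hδ1 | hδ1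
  · -- degenerate case
    have hneg : ∀ S : Finset V, (1 - δ) * lam * Fintype.card V ≤ S.card := by
      intro S
      have : (1 - δ) * lam * Fintype.card V ≤ 0 :=
        mul_nonpos_of_nonpos_of_nonneg
          (mul_nonpos_of_nonpos_of_nonneg (by linarith) hlam.le) hN.le
      exact this.trans (Nat.cast_nonneg _)
    obtain ⟨v, -, hv⟩ := exists_deg G univ hne
    have hclose : ∃ b ∈ B, (((univ.erase v) \ b).card : ℝ) ≤ ε * lam * Fintype.card V := by
      rcases hstab (univ.erase v) (hneg _) with h | h
      · exfalso
        have h1 := eCount_erase G v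
        rw [eCount_univ, card_univ] at hv
        have hc : ((univ.erase v).card : ℝ) = Fintype.card V - 1 := by
          rw [card_erase_of_mem (mem_univ v), card_univ, Nat.cast_sub hNpos]; simp
        rw [hc] at h
        have hv' : 2 * (eTotal G : ℝ) ≤ (Fintype.card V : ℝ) * (univ.filter (G.Adj v)).card := by
          exact_mod_cast hv
        set N : ℝ := (Fintype.card V : ℝ) with hNdef
        have h1' : (eCount G (univ.erase v) : ℝ) + (univ.filter (G.Adj v)).card = eTotal G := by
          exact_mod_cast h1
        have h2 : ((N - 1) / N) ^ 2 * eTotal G ≤ eCount G (univ.erase v) := by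
          refine le_trans ?_ h
          rw [mul_assoc]
          exact le_mul_of_one_le_left (by positivity) hδ1
        rw [div_pow, div_mul_eq_mul_div, div_le_iff₀ (by positivity)] at h2
        nlinarith
      · exact h
    refine ⟨fun L => univ.erase v \ L, fun I _ hIt => ?_⟩
    obtain ⟨L, hL, hLI, hLc⟩ := exists_subsuperset_card_eq (s := I ∩ {v}) (t := I) (n := ℓ)
      inter_subset_left ((card_le_card inter_subset_right).trans (by rw [card_singleton]; omega))
      (by omega)
    refine ⟨L, hLI, hLc, ?_, inter_sdiff_self _ _, Or.inr (hmono _ _ sdiff_subset hclose)⟩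
    intro w hw
    rw [Finset.mem_sdiff] at hw
    rw [Finset.mem_sdiff, mem_erase]
    refine ⟨⟨?_, mem_univ _⟩, hw.2⟩
    rintro rfl
    exact hw.2 (hL (by simp [hw.1]))
  · have hβ : 0 < (1 - δ) * lam := mul_pos (by linarith) hlam
    set β := (1 - δ) * lam with hβdef
    have hx : 0 < 2 * δ * eTotal G / (Fintype.card V : ℝ) ^ 2 := by positivity
    obtain ⟨P, -, hP⟩ := fingerprint_core G
      (fun S => (S.card : ℝ) ≤ β * Fintype.card V ∨
        ∃ b ∈ B, ((S \ b).card : ℝ) ≤ ε * lam * Fintype.card V)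
      (by
        rintro S T h (h1 | h1)
        · left
          exact le_trans (by exact_mod_cast card_le_card h) h1
        · exact Or.inr (hmono S T h h1))
      (Fintype.card V) (2 * δ * eTotal G / (Fintype.card V : ℝ) ^ 2) hx ℓ
      (by
        intro A hA
        left
        refine hA.trans ?_
        rw [mul_comm]
        gcongr
        rw [← Real.le_log_iff_exp_le hβ]
        rw [one_div, Real.log_inv, div_le_iff₀ (by positivity)] at hℓ
        have : Real.log β * (Fintype.card V : ℝ)^2 ≥ -(ℓ * (2 * δ * eTotal G)) := by linarith
        rw [neg_mul, div_mul_eq_mul_div, ← neg_div, div_le_iff₀ (by positivity)]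
        linarith)
      (by
        intro A hA
        rw [not_or, not_le] at hA
        have hApos : (0 : ℝ) < A.card := lt_trans (by positivity) hA.1
        obtain ⟨v, hv, hd⟩ := exists_deg G A (card_pos.1 (by exact_mod_cast hApos))
        refine ⟨v, hv, ?_⟩
        have h := (hstab A hA.1.le).resolve_right hA.2
        have hd' : 2 * (eCount G A : ℝ) ≤ A.card * (A.filter (G.Adj v)).card := by
          exact_mod_cast hd
        refine le_of_mul_le_mul_left ?_ hApos
        refine le_trans (le_of_eq ?_) ((mul_le_mul_of_nonneg_left h zero_le_two).trans hd')
        field_simp)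
      (Fintype.card V) univ le_rfl ℓ le_rfl (by simp)
    refine ⟨P, fun I hI hIt => ?_⟩
    obtain ⟨L, h1, h2, h3, h4, h5⟩ := hP I (subset_univ _) hI (by omega)
    exact ⟨L, h1, h2, h3, h4, h5⟩
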